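/- Under the one-cluster model with finite fourth moments, for every j ∈ {1, …, n}: E[ ( Σ_{h=1}^n { (v + ε_h)² − σ_h² − τ² } ) (v + ε_j) w ] = τ² η^{-1} { n τ² (3 − κ_v) + σ_j² (κ_ε − 3) }, where w = (Σ_{h=1}^n λ_h − 1) v + Σ_{h=1}^n λ_h ε_h. (Up to the scale factor m/N, the first factor in the expectation is the statistic u_{1i} used in estimating τ², so this is the identity M_{1ij}(φ, κ) = (m/N) τ² η_i^{-1}{ n_i τ² (3 − κ_v) + σ_{ij}² (κ_ε − 3) }.) -/

import Mathlib

open MeasureTheory ProbabilityTheory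

/-!
The fourth joint cumulant is multilinear and vanishes as soon as its arguments split into two
independent groups, so on linear forms in independent variables it is diagonal. The weights `λ_h`
are exactly those that make `w` uncorrelated with every `v + ε_h`; hence all the covariance
products drop out of the expectation, leaving
`∑_h κ₄(v + ε_h, v + ε_h, v + ε_j, w) = n (∑ λ_h - 1) κ₄(v) + λ_j κ₄(ε_j)`.
-/

section FourthCumulant

variable {Ω ι : Type*} [MeasurableSpace Ω] {μ : Measure Ω} {X Y Z T : Ω → ℝ}

/-- The joint cumulant of order four of real random variables, written with central moments. -/
noncomputable def fourthJointCumulant (X Y Z T : Ω → ℝ) (μ : Measure Ω) : ℝ :=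
  ∫ ω, (X ω - ∫ x, X x ∂μ) * (Y ω - ∫ x, Y x ∂μ)
      * ((Z ω - ∫ x, Z x ∂μ) * (T ω - ∫ x, T x ∂μ)) ∂μ
    - cov[X, Y; μ] * cov[Z, T; μ] - cov[X, Z; μ] * cov[Y, T; μ] - cov[X, T; μ] * cov[Y, Z; μ]

/-- The fourth cumulant of a real random variable; it equals the variance squared times the excess
kurtosis. -/
noncomputable def fourthCumulant (X : Ω → ℝ) (μ : Measure Ω) : ℝ :=
  fourthJointCumulant X X X X μ

lemma fourthJointCumulant_rotate (X Y Z T : Ω → ℝ) :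
    fourthJointCumulant X Y Z T μ = fourthJointCumulant Y Z T X μ := by
  have hmoment : ∫ ω, (X ω - ∫ x, X x ∂μ) * (Y ω - ∫ x, Y x ∂μ)
        * ((Z ω - ∫ x, Z x ∂μ) * (T ω - ∫ x, T x ∂μ)) ∂μ
      = ∫ ω, (Y ω - ∫ x, Y x ∂μ) * (Z ω - ∫ x, Z x ∂μ)
        * ((T ω - ∫ x, T x ∂μ) * (X ω - ∫ x, X x ∂μ)) ∂μ :=
    integral_congr_ae (.of_forall fun ω => by ring)
  unfold fourthJointCumulant
  rw [covariance_comm T X, covariance_comm Z X, covariance_comm Y X, hmoment]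
  ring

lemma fourthJointCumulant_swap_middle (X Y Z T : Ω → ℝ) :
    fourthJointCumulant X Y Z T μ = fourthJointCumulant X Z Y T μ := by
  unfold fourthJointCumulant
  rw [covariance_comm Z Y, sub_right_comm _ (cov[X, Y; μ] * _)]
  congr 3
  exact integral_congr_ae (.of_forall fun ω => by ring)

lemma fourthCumulant_of_integral_eq_zero (hX : ∫ ω, X ω ∂μ = 0) :
    fourthCumulant X μ = ∫ ω, X ω ^ 4 ∂μ - 3 * (∫ ω, X ω ^ 2 ∂μ) ^ 2 := by
  simp only [fourthCumulant, fourthJointCumulant, covariance, hX, sub_zero]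
  ring_nf

lemma integrable_mul_mul_mul_of_memLp_four (hX : MemLp X 4 μ) (hY : MemLp Y 4 μ)
    (hZ : MemLp Z 4 μ) (hT : MemLp T 4 μ) :
    Integrable (fun ω => X ω * Y ω * (Z ω * T ω)) μ := by
  have : ENNReal.HolderTriple 4 4 2 := ⟨by
    rw [← two_mul, show (4 : ENNReal) = 2 * 2 by norm_num,
      ENNReal.mul_inv (by simp) (by simp), ← mul_assoc,
      ENNReal.mul_inv_cancel (by simp) (by simp), one_mul]⟩
  exact (hY.mul hX : MemLp _ 2 μ).integrable_mul (hT.mul hZ : MemLp _ 2 μ)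

lemma integral_linearForm [Fintype ι] {X : ι → Ω → ℝ} (hX : ∀ i, Integrable (X i) μ) (a : ι → ℝ) :
    ∫ ω, ∑ i, a i * X i ω ∂μ = ∑ i, a i * ∫ ω, X i ω ∂μ := by
  rw [integral_finsetSum _ fun i _ => (hX i).const_mul (a i)]
  simp only [integral_const_mul]

lemma fourthJointCumulant_sum_left [Fintype ι] [IsFiniteMeasure μ] {X : ι → Ω → ℝ}
    (hX : ∀ i, MemLp (X i) 4 μ) (hY : MemLp Y 4 μ) (hZ : MemLp Z 4 μ) (hT : MemLp T 4 μ)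
    (a : ι → ℝ) :
    fourthJointCumulant (fun ω => ∑ i, a i * X i ω) Y Z T μ
      = ∑ i, a i * fourthJointCumulant (X i) Y Z T μ := by
  have hcov {U : Ω → ℝ} (hU : MemLp U 4 μ) :
      cov[fun ω => ∑ i, a i * X i ω, U; μ] = ∑ i, a i * cov[X i, U; μ] := by
    have hX₂ (i : ι) : MemLp (fun ω => a i * X i ω) 2 μ :=
      ((hX i).mono_exponent (by norm_num)).const_mul (a i)
    simp only [covariance_fun_sum_left hX₂ (hU.mono_exponent (by norm_num)),
      covariance_const_mul_left]
  have hmean := integral_linearForm (fun i => (hX i).integrable (by norm_num)) a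
  have hcentral (i : ι) := integrable_mul_mul_mul_of_memLp_four
    ((hX i).sub (memLp_const (∫ x, X i x ∂μ))) (hY.sub (memLp_const (∫ x, Y x ∂μ)))
    (hZ.sub (memLp_const (∫ x, Z x ∂μ))) (hT.sub (memLp_const (∫ x, T x ∂μ)))
  simp only [Pi.sub_apply] at hcentral
  simp only [fourthJointCumulant, hcov hY, hcov hZ, hcov hT, hmean, ← Finset.sum_sub_distrib,
    ← mul_sub, Finset.sum_mul, mul_assoc (a _)]
  rw [integral_finsetSum _ fun i _ => (hcentral i).const_mul (a i)]
  simp only [integral_const_mul, mul_sub (a _), Finset.sum_sub_distrib]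

lemma fourthJointCumulant_eq_zero_of_indepFun_triple [IsProbabilityMeasure μ]
    (hX : MemLp X 4 μ) (hY : MemLp Y 4 μ) (hZ : MemLp Z 4 μ) (hT : MemLp T 4 μ)
    (hind : IndepFun X (fun ω => (Y ω, Z ω, T ω)) μ) :
    fourthJointCumulant X Y Z T μ = 0 := by
  have hcov {U : Ω → ℝ} (hU : MemLp U 4 μ) (hXU : IndepFun X U μ) : cov[X, U; μ] = 0 :=
    hXU.covariance_eq_zero (hX.mono_exponent (by norm_num)) (hU.mono_exponent (by norm_num))
  have hXY := hcov hY (hind.comp measurable_id measurable_fst)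
  have hXZ := hcov hZ (hind.comp measurable_id (measurable_fst.comp measurable_snd))
  have hXT := hcov hT (hind.comp measurable_id (measurable_snd.comp measurable_snd))
  have hmoment := hind.integral_fun_comp_mul_comp
    (f := fun x => x - ∫ ω, X ω ∂μ)
    (g := fun p : ℝ × ℝ × ℝ =>
      (p.1 - ∫ ω, Y ω ∂μ) * ((p.2.1 - ∫ ω, Z ω ∂μ) * (p.2.2 - ∫ ω, T ω ∂μ)))
    hX.aemeasurable (hY.aemeasurable.prodMk (hZ.aemeasurable.prodMk hT.aemeasurable))
    (by fun_prop) (by fun_prop)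
  have hcentred : ∫ ω, (X ω - ∫ x, X x ∂μ) ∂μ = 0 := by
    simp [integral_sub (hX.integrable (by norm_num)) (integrable_const _)]
  simp only [fourthJointCumulant, hXY, hXZ, hXT, mul_assoc, hmoment, hcentred, zero_mul, sub_zero]

lemma fourthJointCumulant_eq_zero_of_indepFun_prodMk [IsFiniteMeasure μ]
    (hX : MemLp X 4 μ) (hY : MemLp Y 4 μ) (hZ : MemLp Z 4 μ) (hT : MemLp T 4 μ)
    (hind : IndepFun (fun ω => (X ω, Y ω)) (fun ω => (Z ω, T ω)) μ) :
    fourthJointCumulant X Y Z T μ = 0 := by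
  have hcov {U V : Ω → ℝ} (hU : MemLp U 4 μ) (hV : MemLp V 4 μ) (hUV : IndepFun U V μ) :
      cov[U, V; μ] = 0 :=
    hUV.covariance_eq_zero (hU.mono_exponent (by norm_num)) (hV.mono_exponent (by norm_num))
  have hXZ := hcov hX hZ (hind.comp measurable_fst measurable_fst)
  have hXT := hcov hX hT (hind.comp measurable_fst measurable_snd)
  have hmoment := hind.integral_fun_comp_mul_comp
    (f := fun p : ℝ × ℝ => (p.1 - ∫ ω, X ω ∂μ) * (p.2 - ∫ ω, Y ω ∂μ))
    (g := fun p : ℝ × ℝ => (p.1 - ∫ ω, Z ω ∂μ) * (p.2 - ∫ ω, T ω ∂μ))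
    (hX.aemeasurable.prodMk hY.aemeasurable) (hZ.aemeasurable.prodMk hT.aemeasurable)
    (by fun_prop) (by fun_prop)
  simp only [fourthJointCumulant, hXZ, hXT, hmoment, zero_mul, sub_zero]
  exact sub_self _

lemma integral_sum_sq_sub_mul_mul_eq_sum_fourthJointCumulant [Fintype ι] [IsFiniteMeasure μ]
    {X : ι → Ω → ℝ} (hX : ∀ i, MemLp (X i) 4 μ) (hY : MemLp Y 4 μ) (hZ : MemLp Z 4 μ)
    (hX₀ : ∀ i, ∫ ω, X i ω ∂μ = 0) (hY₀ : ∫ ω, Y ω ∂μ = 0) (hZ₀ : ∫ ω, Z ω ∂μ = 0)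
    (hXZ : ∀ i, cov[X i, Z; μ] = 0) (hYZ : cov[Y, Z; μ] = 0) (c : ι → ℝ) :
    ∫ ω, (∑ i, (X i ω ^ 2 - c i)) * Y ω * Z ω ∂μ
      = ∑ i, fourthJointCumulant (X i) (X i) Y Z μ := by
  have hquartic (i : ι) := integrable_mul_mul_mul_of_memLp_four (hX i) (hX i) hY hZ
  have hquadratic : Integrable (fun ω => Y ω * Z ω) μ :=
    MemLp.integrable_mul (p := 2) (q := 2) (hY.mono_exponent (by norm_num))
      (hZ.mono_exponent (by norm_num))
  have hterm (i : ι) :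
      Integrable (fun ω => X i ω * X i ω * (Y ω * Z ω) - c i * (Y ω * Z ω)) μ :=
    (hquartic i).sub (hquadratic.const_mul (c i))
  have hmixed : ∫ ω, Y ω * Z ω ∂μ = 0 := by
    simpa only [covariance, hY₀, hZ₀, sub_zero] using hYZ
  have hcumulant (i : ι) :
      fourthJointCumulant (X i) (X i) Y Z μ = ∫ ω, X i ω * X i ω * (Y ω * Z ω) ∂μ := by
    simp only [fourthJointCumulant, hX₀, hY₀, hZ₀, hXZ, hYZ, sub_zero, mul_zero, zero_mul]
  calc
    ∫ ω, (∑ i, (X i ω ^ 2 - c i)) * Y ω * Z ω ∂μ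
      = ∫ ω, ∑ i, (X i ω * X i ω * (Y ω * Z ω) - c i * (Y ω * Z ω)) ∂μ := by
      simp only [Finset.sum_mul, sub_mul, sq, mul_assoc]
    _ = ∑ i, fourthJointCumulant (X i) (X i) Y Z μ := by
      rw [integral_finsetSum _ fun i _ => hterm i]
      simp only [integral_sub (hquartic _) (hquadratic.const_mul _), integral_const_mul, hmixed,
        mul_zero, sub_zero, hcumulant]

end FourthCumulant

section LinearForms

variable {Ω ι : Type*} [MeasurableSpace Ω] {μ : Measure Ω} [IsProbabilityMeasure μ]
  {X : ι → Ω → ℝ}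

lemma fourthJointCumulant_eq_zero_of_forall_ne (hX : ∀ i, MemLp (X i) 4 μ) (hind : iIndepFun X μ)
    {a b c d : ι} (hab : a ≠ b) (hac : a ≠ c) (had : a ≠ d) :
    fourthJointCumulant (X a) (X b) (X c) (X d) μ = 0 := by
  classical
  have hdisj : Disjoint ({a} : Finset ι) {b, c, d} := by simp [hab, hac, had]
  refine fourthJointCumulant_eq_zero_of_indepFun_triple (hX a) (hX b) (hX c) (hX d) ?_
  exact (hind.indepFun_finset₀ _ _ hdisj fun i => (hX i).aemeasurable).comp
    (φ := fun x : ({a} : Finset ι) → ℝ => x ⟨a, by simp⟩)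
    (ψ := fun x : ({b, c, d} : Finset ι) → ℝ =>
      (x ⟨b, by simp⟩, x ⟨c, by simp⟩, x ⟨d, by simp⟩))
    (by fun_prop) (by fun_prop)

lemma fourthJointCumulant_eq_ite [DecidableEq ι] (hX : ∀ i, MemLp (X i) 4 μ)
    (hind : iIndepFun X μ) (a b c d : ι) :
    fourthJointCumulant (X a) (X b) (X c) (X d) μ
      = if a = b ∧ a = c ∧ a = d then fourthCumulant (X a) μ else 0 := by
  have hsingle {a b c d : ι} (hab : a ≠ b) (hac : a ≠ c) (had : a ≠ d) :
      fourthJointCumulant (X a) (X b) (X c) (X d) μ = 0 :=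
    fourthJointCumulant_eq_zero_of_forall_ne hX hind hab hac had
  have hpair {a b c d : ι} (hac : a ≠ c) (had : a ≠ d) (hbc : b ≠ c) (hbd : b ≠ d) :
      fourthJointCumulant (X a) (X b) (X c) (X d) μ = 0 :=
    fourthJointCumulant_eq_zero_of_indepFun_prodMk (hX a) (hX b) (hX c) (hX d)
      (hind.indepFun_prodMk_prodMk₀ (fun i => (hX i).aemeasurable) a b c d hac had hbc hbd)
  split_ifs with hall
  · obtain ⟨rfl, rfl, rfl⟩ := hall
    rfl
  rcases eq_or_ne a b with rfl | hab
  · rcases eq_or_ne a c with rfl | hac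
    · have had : a ≠ d := fun had => hall ⟨rfl, rfl, had⟩
      rw [← fourthJointCumulant_rotate, hsingle had.symm had.symm had.symm]
    · rcases eq_or_ne a d with rfl | had
      · rw [fourthJointCumulant_rotate, fourthJointCumulant_rotate,
          hsingle hac.symm hac.symm hac.symm]
      · exact hpair hac had hac had
  · rcases eq_or_ne a c with rfl | hac
    · rcases eq_or_ne b d with rfl | hbd
      · rw [fourthJointCumulant_swap_middle, hpair hab hab hab hab]
      · rw [fourthJointCumulant_rotate, hsingle hab.symm hbd hab.symm]
    · rcases eq_or_ne a d with rfl | had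
      · rw [← fourthJointCumulant_rotate, hpair hab hac hab hac]
      · exact hsingle hab hac had

lemma fourthJointCumulant_linearForms [Fintype ι] (hX : ∀ i, MemLp (X i) 4 μ)
    (hind : iIndepFun X μ) (a b c d : ι → ℝ) :
    fourthJointCumulant (fun ω => ∑ i, a i * X i ω) (fun ω => ∑ i, b i * X i ω)
        (fun ω => ∑ i, c i * X i ω) (fun ω => ∑ i, d i * X i ω) μ
      = ∑ i, a i * b i * c i * d i * fourthCumulant (X i) μ := by
  classical
  have hform (e : ι → ℝ) : MemLp (fun ω => ∑ i, e i * X i ω) 4 μ :=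
    memLp_finsetSum _ fun i _ => (hX i).const_mul (e i)
  rw [fourthJointCumulant_sum_left hX (hform b) (hform c) (hform d)]
  refine Finset.sum_congr rfl fun i _ => ?_
  rw [fourthJointCumulant_rotate, fourthJointCumulant_sum_left hX (hform c) (hform d) (hX i)]
  simp only [fourthJointCumulant_rotate (X _) _ _ (X i),
    fourthJointCumulant_sum_left hX (hform d) (hX i) (hX _)]
  simp only [fourthJointCumulant_rotate (X _) _ (X i) (X _),
    fourthJointCumulant_sum_left hX (hX i) (hX _) (hX _)]
  simp only [fourthJointCumulant_rotate (X _) (X i), fourthJointCumulant_eq_ite hX hind]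
  simp only [ite_and, mul_ite, mul_zero, Finset.sum_ite_eq, Finset.mem_univ, if_true,
    Finset.sum_ite_irrel, Finset.sum_const_zero]
  ring

lemma covariance_linearForms [Fintype ι] (hX : ∀ i, MemLp (X i) 2 μ)
    (hind : Pairwise fun i j => IndepFun (X i) (X j) μ) (a b : ι → ℝ) :
    cov[fun ω => ∑ i, a i * X i ω, fun ω => ∑ i, b i * X i ω; μ]
      = ∑ i, a i * b i * Var[X i; μ] := by
  classical
  have hcov (i k : ι) : cov[X i, X k; μ] = if i = k then Var[X i; μ] else 0 := by
    split_ifs with hik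
    · rw [← hik, covariance_self (hX i).aemeasurable]
    · exact (hind hik).covariance_eq_zero (hX i) (hX k)
  rw [covariance_fun_sum_fun_sum (fun i => (hX i).const_mul (a i)) fun i => (hX i).const_mul (b i)]
  simp only [covariance_const_mul_left, covariance_const_mul_right, hcov, mul_ite, mul_zero,
    Finset.sum_ite_eq, Finset.mem_univ, if_true, mul_assoc, mul_left_comm (b _)]

end LinearForms

lemma sum_shrinkage_sub_one {ι : Type*} [Fintype ι] {τsq η : ℝ} (hη : η ≠ 0) {s lam : ι → ℝ}
    (hηs : η = 1 + τsq * ∑ h, (s h)⁻¹) (hlam : ∀ h, lam h = τsq * (s h)⁻¹ * η⁻¹) :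
    ∑ h, lam h - 1 = -η⁻¹ := by
  simp only [hlam, ← Finset.sum_mul, ← Finset.mul_sum, eq_sub_of_add_eq' hηs.symm, sub_mul,
    mul_inv_cancel₀ hη]
  ring

section NestedError

variable {Ω ι : Type*} [MeasurableSpace Ω] {μ : Measure Ω} [IsProbabilityMeasure μ] [Fintype ι]
  {v : Ω → ℝ} {ε : ι → Ω → ℝ}

lemma covariance_add_linearForm (hv : MemLp v 2 μ) (hε : ∀ h, MemLp (ε h) 2 μ)
    (hind : iIndepFun (fun i : Option ι => i.elim v ε) μ) (a : ℝ) (b : ι → ℝ) (j : ι) :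
    cov[fun ω => v ω + ε j ω, fun ω => a * v ω + ∑ h, b h * ε h ω; μ]
      = a * Var[v; μ] + b j * Var[ε j; μ] := by
  classical
  have hX (i : Option ι) : MemLp (i.elim v ε) 2 μ := i.rec hv hε
  have hforms := covariance_linearForms hX (fun _ _ => hind.indepFun)
    (fun i => i.elim 1 (Pi.single j 1)) (fun i => i.elim a b)
  simpa [Fintype.sum_option, Pi.single_apply] using hforms

lemma fourthJointCumulant_add_linearForm [DecidableEq ι] (hv : MemLp v 4 μ)
    (hε : ∀ h, MemLp (ε h) 4 μ) (hind : iIndepFun (fun i : Option ι => i.elim v ε) μ)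
    (a : ℝ) (b : ι → ℝ) (h j : ι) :
    fourthJointCumulant (fun ω => v ω + ε h ω) (fun ω => v ω + ε h ω) (fun ω => v ω + ε j ω)
        (fun ω => a * v ω + ∑ k, b k * ε k ω) μ
      = a * fourthCumulant v μ + if h = j then b j * fourthCumulant (ε j) μ else 0 := by
  have hX (i : Option ι) : MemLp (i.elim v ε) 4 μ := i.rec hv hε
  have hforms := fourthJointCumulant_linearForms hX hind (fun i => i.elim 1 (Pi.single h 1))
    (fun i => i.elim 1 (Pi.single h 1)) (fun i => i.elim 1 (Pi.single j 1)) (fun i => i.elim a b)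
  rcases eq_or_ne h j with rfl | hhj
  · simpa [Fintype.sum_option, Pi.single_apply] using hforms
  · simpa [Fintype.sum_option, Pi.single_apply, hhj, Ne.symm hhj] using hforms

lemma integral_sum_sq_sub_mul_add_mul_linearForm (hv : MemLp v 4 μ) (hε : ∀ h, MemLp (ε h) 4 μ)
    (hv₀ : ∫ ω, v ω ∂μ = 0) (hε₀ : ∀ h, ∫ ω, ε h ω ∂μ = 0)
    (hind : iIndepFun (fun i : Option ι => i.elim v ε) μ) {a : ℝ} {b : ι → ℝ}
    (hab : ∀ h, a * Var[v; μ] + b h * Var[ε h; μ] = 0) (c : ι → ℝ) (j : ι) :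
    ∫ ω, (∑ h, ((v ω + ε h ω) ^ 2 - c h)) * (v ω + ε j ω) * (a * v ω + ∑ h, b h * ε h ω) ∂μ
      = Fintype.card ι * (a * fourthCumulant v μ) + b j * fourthCumulant (ε j) μ := by
  classical
  have hv₁ : Integrable v μ := hv.integrable (by norm_num)
  have hε₁ (h : ι) : Integrable (ε h) μ := (hε h).integrable (by norm_num)
  have hy (h : ι) : MemLp (fun ω => v ω + ε h ω) 4 μ := hv.add (hε h)
  have hy₀ (h : ι) : ∫ ω, v ω + ε h ω ∂μ = 0 := by
    rw [integral_add hv₁ (hε₁ h), hv₀, hε₀, add_zero]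
  have hw : MemLp (fun ω => a * v ω + ∑ h, b h * ε h ω) 4 μ :=
    (hv.const_mul a).add (memLp_finsetSum _ fun h _ => (hε h).const_mul (b h))
  have hw₀ : ∫ ω, a * v ω + ∑ h, b h * ε h ω ∂μ = 0 := by
    rw [integral_add (hv₁.const_mul a) (integrable_finsetSum _ fun h _ => (hε₁ h).const_mul (b h)),
      integral_const_mul, integral_linearForm hε₁]
    simp only [hv₀, hε₀, mul_zero, Finset.sum_const_zero, add_zero]
  have hcov (h : ι) : cov[fun ω => v ω + ε h ω, fun ω => a * v ω + ∑ h, b h * ε h ω; μ] = 0 := by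
    rw [covariance_add_linearForm (hv.mono_exponent (by norm_num))
      (fun h => (hε h).mono_exponent (by norm_num)) hind, hab]
  rw [integral_sum_sq_sub_mul_mul_eq_sum_fourthJointCumulant hy (hy j) hw hy₀ (hy₀ j) hw₀ hcov
    (hcov j)]
  simp only [fourthJointCumulant_add_linearForm hv hε hind, Finset.sum_add_distrib,
    Finset.sum_const, Finset.card_univ, nsmul_eq_mul, Finset.sum_ite_eq', Finset.mem_univ, if_true]

theorem stmt_13_general (μ : Measure Ω) [IsProbabilityMeasure μ] (v : Ω → ℝ) (ε : ι → Ω → ℝ)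
    (hindep : iIndepFun (fun i : Option ι => i.elim v ε) μ)
    (τsq : ℝ) (s : ι → ℝ) (hs : ∀ j, 0 < s j)
    (hv4 : MemLp v 4 μ) (hε4 : ∀ j, MemLp (ε j) 4 μ)
    (hEv : ∫ ω, v ω ∂μ = 0) (hEvsq : ∫ ω, (v ω) ^ 2 ∂μ = τsq)
    (hEε : ∀ j, ∫ ω, ε j ω ∂μ = 0) (hEεsq : ∀ j, ∫ ω, (ε j ω) ^ 2 ∂μ = s j)
    (κv : ℝ) (κε : ι → ℝ) (hEv4 : ∫ ω, (v ω) ^ 4 ∂μ = κv * τsq ^ 2)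
    (hEε4 : ∀ j, ∫ ω, (ε j ω) ^ 4 ∂μ = κε j * (s j) ^ 2)
    (η : ℝ) (hη : η = 1 + τsq * ∑ h, (s h)⁻¹)
    (lam : ι → ℝ) (hlam : ∀ j, lam j = τsq * (s j)⁻¹ * η⁻¹)
    (w : Ω → ℝ) (hw : ∀ ω, w ω = (∑ h, lam h - 1) * v ω + ∑ h, lam h * ε h ω) :
    ∀ j, ∫ ω, (∑ h, ((v ω + ε h ω) ^ 2 - s h - τsq)) * (v ω + ε j ω) * w ω ∂μ
      = τsq * η⁻¹ * (Fintype.card ι * τsq * (3 - κv) + s j * (κε j - 3)) := by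
  intro j
  have hη₀ : η ≠ 0 := by
    have hτ : 0 ≤ τsq := hEvsq ▸ integral_nonneg fun ω => sq_nonneg (v ω)
    have hsum : 0 ≤ ∑ h, (s h)⁻¹ := Finset.sum_nonneg fun h _ => (inv_pos.2 (hs h)).le
    rw [hη]
    positivity
  have hlam_mul (h : ι) : lam h * s h = τsq * η⁻¹ := by
    rw [hlam, mul_right_comm, inv_mul_cancel_right₀ (hs h).ne']
  have huncorrelated (h : ι) : -η⁻¹ * Var[v; μ] + lam h * Var[ε h; μ] = 0 := by
    rw [variance_of_integral_eq_zero hv4.aemeasurable hEv, hEvsq,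
      variance_of_integral_eq_zero (hε4 h).aemeasurable (hEε h), hEεsq, hlam_mul]
    ring
  simp only [hw, sum_shrinkage_sub_one hη₀ hη hlam, sub_sub]
  rw [integral_sum_sq_sub_mul_add_mul_linearForm hv4 hε4 hEv hEε hindep huncorrelated,
    fourthCumulant_of_integral_eq_zero hEv, hEv4, hEvsq,
    fourthCumulant_of_integral_eq_zero (hEε j), hEε4, hEεsq]
  linear_combination (κε j - 3) * s j * hlam_mul j

end NestedError

/-- In the one-cluster model with finite fourth moments,
`E[(∑_h {(v+ε_h)² − σ_h² − τ²}) (v+ε_j) w] = τ² η⁻¹ {n τ² (3 − κ_v) + σ_j² (κ_ε − 3)}`,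
where `w = (∑ λ_h − 1) v + ∑ λ_h ε_h`. -/
theorem stmt_13 {Ω : Type*} [MeasurableSpace Ω] (μ : Measure Ω) [IsProbabilityMeasure μ]
    (n : ℕ) (hn : 1 ≤ n) (v : Ω → ℝ) (ε : Fin n → Ω → ℝ)
    (hv : Measurable v) (hε : ∀ j, Measurable (ε j))
    (hindep : iIndepFun (m := fun _ : Option (Fin n) => (inferInstance : MeasurableSpace ℝ))
      (fun i => Option.elim i v ε) μ)
    (τsq : ℝ) (hτ : 0 ≤ τsq) (s : Fin n → ℝ) (hs : ∀ j, 0 < s j)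
    (hv4 : MemLp v 4 μ) (hε4 : ∀ j, MemLp (ε j) 4 μ)
    (hEv : ∫ ω, v ω ∂μ = 0) (hEvsq : ∫ ω, (v ω) ^ 2 ∂μ = τsq)
    (hEε : ∀ j, ∫ ω, ε j ω ∂μ = 0) (hEεsq : ∀ j, ∫ ω, (ε j ω) ^ 2 ∂μ = s j)
    (hEv3 : ∫ ω, (v ω) ^ 3 ∂μ = 0) (hEε3 : ∀ j, ∫ ω, (ε j ω) ^ 3 ∂μ = 0)
    (κv κε : ℝ) (hEv4 : ∫ ω, (v ω) ^ 4 ∂μ = κv * τsq ^ 2)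
    (hEε4 : ∀ j, ∫ ω, (ε j ω) ^ 4 ∂μ = κε * (s j) ^ 2)
    (η : ℝ) (hη : η = 1 + τsq * ∑ h, (s h)⁻¹)
    (lam : Fin n → ℝ) (hlam : ∀ j, lam j = τsq * (s j)⁻¹ * η⁻¹)
    (w : Ω → ℝ) (hw : ∀ ω, w ω = (∑ h, lam h - 1) * v ω + ∑ h, lam h * ε h ω) :
    ∀ j, ∫ ω, (∑ h, ((v ω + ε h ω) ^ 2 - s h - τsq)) * (v ω + ε j ω) * w ω ∂μ
      = τsq * η⁻¹ * ((n : ℝ) * τsq * (3 - κv) + s j * (κε - 3)) := by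
  simpa only [Fintype.card_fin] using
    stmt_13_general μ v ε hindep τsq s hs hv4 hε4 hEv hEvsq hEε hEεsq κv (fun _ => κε) hEv4 hEε4
      η hη lam hlam w hw
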